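/- Let A₁ and A₂ be complex Banach algebras and let φ : A₁ → A₂ be a continuous algebra homomorphism with dense range. If A₁ is 0-point amenable, then A₂ is 0-point amenable. -/

import Mathlib

/-- A continuous linear functional `φ` on `A` is *multiplicative* when `φ(ab) = φ(a)φ(b)`.
The nonzero such functionals are the characters of `A` (the set `Δ(A)`); together with `0`
they form `Δ₀(A)`. -/
def IsMulFunctional {A : Type*} [NonUnitalNormedRing A] [NormedSpace ℂ A]
    (φ : A →L[ℂ] ℂ) : Prop :=
  ∀ a b : A, φ (a * b) = φ a * φ b

/-- `d ∈ A*` is a *continuous point derivation* of `A` at `φ` when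
`d(ab) = d(a)φ(b) + φ(a)d(b)` for all `a, b ∈ A`. -/
def IsPointDerivationAt {A : Type*} [NonUnitalNormedRing A] [NormedSpace ℂ A]
    (φ d : A →L[ℂ] ℂ) : Prop :=
  ∀ a b : A, d (a * b) = d a * φ b + φ a * d b

/-- `A` is *0-point amenable* if the only continuous point derivation of `A` at any
`φ ∈ Δ₀(A)` (i.e. any multiplicative functional, zero allowed) is zero. -/
def ZeroPointAmenable (A : Type*) [NonUnitalNormedRing A] [NormedSpace ℂ A] : Prop :=
  ∀ φ d : A →L[ℂ] ℂ, IsMulFunctional φ → IsPointDerivationAt φ d → d = 0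

/-- `A` is *point amenable* if the only continuous point derivation of `A` at any character
`φ ∈ Δ(A)` (i.e. any nonzero multiplicative functional) is zero. -/
def PointAmenable (A : Type*) [NonUnitalNormedRing A] [NormedSpace ℂ A] : Prop :=
  ∀ φ d : A →L[ℂ] ℂ, IsMulFunctional φ → φ ≠ 0 → IsPointDerivationAt φ d → d = 0

section Pullback

variable {A₁ A₂ : Type*} [NonUnitalNormedRing A₁] [NormedSpace ℂ A₁]
  [NonUnitalNormedRing A₂] [NormedSpace ℂ A₂] {f : A₁ →L[ℂ] A₂}

theorem IsMulFunctional.comp {ψ : A₂ →L[ℂ] ℂ} (hψ : IsMulFunctional ψ)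
    (hf : ∀ a b : A₁, f (a * b) = f a * f b) : IsMulFunctional (ψ.comp f) := fun a b =>
  (congrArg ψ (hf a b)).trans (hψ (f a) (f b))

theorem IsPointDerivationAt.comp {ψ d : A₂ →L[ℂ] ℂ} (hd : IsPointDerivationAt ψ d)
    (hf : ∀ a b : A₁, f (a * b) = f a * f b) :
    IsPointDerivationAt (ψ.comp f) (d.comp f) := fun a b =>
  (congrArg d (hf a b)).trans (hd (f a) (f b))

theorem zeroPointAmenable_of_denseRange_hom_general (hf : ∀ a b : A₁, f (a * b) = f a * f b)
    (hdense : DenseRange f) (h : ZeroPointAmenable A₁) : ZeroPointAmenable A₂ := by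
  intro ψ d hψ hd
  have hdf : d.comp f = 0 := h _ _ (hψ.comp hf) (hd.comp hf)
  have hd_range : d ∘ f = (0 : A₂ →L[ℂ] ℂ) ∘ f := funext fun a => DFunLike.congr_fun hdf a
  exact DFunLike.coe_injective (hdense.equalizer d.continuous continuous_zero hd_range)

end Pullback

/-- If `φ : A₁ → A₂` is a continuous algebra homomorphism with dense range between complex
Banach algebras and `A₁` is 0-point amenable, then so is `A₂`. -/
theorem zeroPointAmenable_of_denseRange_hom {A₁ A₂ : Type*}
    [NonUnitalNormedRing A₁] [NormedSpace ℂ A₁] [IsScalarTower ℂ A₁ A₁]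
    [SMulCommClass ℂ A₁ A₁] [CompleteSpace A₁]
    [NonUnitalNormedRing A₂] [NormedSpace ℂ A₂] [IsScalarTower ℂ A₂ A₂]
    [SMulCommClass ℂ A₂ A₂] [CompleteSpace A₂]
    (φ : A₁ →L[ℂ] A₂) (hφmul : ∀ a b : A₁, φ (a * b) = φ a * φ b)
    (hφdense : DenseRange φ)
    (h : ZeroPointAmenable A₁) :
    ZeroPointAmenable A₂ :=
  zeroPointAmenable_of_denseRange_hom_general hφmul hφdense h
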